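/- Let q > 2, Λ ≥ 1, and let u : ℝ/ℤ → ℝⁿ be an embedded, regular C¹ curve with bil(u) < ∞, [u']_{W^{1-1/q,q}} < ∞, and 1/Λ ≤ |u'(x)| ≤ Λ for all x ∈ ℝ/ℤ. Then the classical tangent-point functional TP_cl and the variant TP satisfy |TP_cl(u) − TP(u)| ≤ (bil u)^{2q} · Λ^{2q} · [u']_{W^{1-1/q,q}}^q · (Λ − 1). -/

import Mathlib

open MeasureTheory Set Filter
open scoped RealInnerProductSpace ENNReal Topology

noncomputable section

/-- The distance on the circle `ℝ/ℤ` between the points represented by `x` and `y`. -/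
def circDist (x y : ℝ) : ℝ := ‖((x - y : ℝ) : AddCircle (1 : ℝ))‖

/-- The representative of `z` modulo `1` lying in `(-1/2, 1/2]`. -/
def wrap (z : ℝ) : ℝ := 1 / 2 - Int.fract (1 / 2 - z)

/-- Squared wedge norm `|a ∧ b|² = |a|²|b|² - ⟨a,b⟩²`. -/
def wedgeSq {n : ℕ} (a b : EuclideanSpace ℝ (Fin n)) : ℝ :=
  ‖a‖ ^ 2 * ‖b‖ ^ 2 - ⟪a, b⟫ ^ 2

/-- Wedge inner product `⟨a∧b, c∧d⟩ = ⟨a,c⟩⟨b,d⟩ - ⟨a,d⟩⟨b,c⟩`. -/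
def wedgeInner {n : ℕ} (a b c d : EuclideanSpace ℝ (Fin n)) : ℝ :=
  ⟪a, c⟫ * ⟪b, d⟫ - ⟪a, d⟫ * ⟪b, c⟫

/-- Fundamental domain for double integrals over `(ℝ/ℤ)²`. -/
def unitSq : Set (ℝ × ℝ) := Ioc (0 : ℝ) 1 ×ˢ Ioc (0 : ℝ) 1

/-- The tangent-point functional `TP` (extended-real-valued). -/
def TPe {n : ℕ} (q : ℝ) (u : ℝ → EuclideanSpace ℝ (Fin n)) : ℝ≥0∞ :=
  ENNReal.ofReal (1 / q) *
    ∫⁻ p in unitSq, ENNReal.ofReal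
      (wedgeSq (deriv u p.2) (u p.1 - u p.2) ^ (q / 2) / ‖u p.1 - u p.2‖ ^ (2 * q))

/-- The tangent-point functional `TP` (real-valued). -/
def TPr {n : ℕ} (q : ℝ) (u : ℝ → EuclideanSpace ℝ (Fin n)) : ℝ := (TPe q u).toReal

/-- The `q`-th power of the Sobolev–Slobodeckii seminorm `[f]_{W^{s,q}}` on `ℝ/ℤ`. -/
def sobSemPow {n : ℕ} (s q : ℝ) (f : ℝ → EuclideanSpace ℝ (Fin n)) : ℝ≥0∞ :=
  ∫⁻ p in unitSq, ENNReal.ofReal (‖f p.1 - f p.2‖ ^ q / circDist p.1 p.2 ^ (1 + s * q))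

/-- The `W^{s,q}`-norm `‖f‖_{L^q} + [f]_{W^{s,q}}`. -/
def Wnorm {n : ℕ} (s q : ℝ) (f : ℝ → EuclideanSpace ℝ (Fin n)) : ℝ :=
  (∫ x in Ioc (0 : ℝ) 1, ‖f x‖ ^ q) ^ (1 / q) + (sobSemPow s q f).toReal ^ (1 / q)

/-- The bi-Lipschitz constant `bil(u) = sup_{x ≢ y} |x-y|_{ℝ/ℤ}/|u(x)-u(y)|`. -/
def bil {n : ℕ} (u : ℝ → EuclideanSpace ℝ (Fin n)) : ℝ≥0∞ :=
  ⨆ (x : ℝ) (y : ℝ) (_ : circDist x y ≠ 0),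
    ENNReal.ofReal (circDist x y) / ENNReal.ofReal ‖u x - u y‖

/-- The `L^∞`-norm of the derivative of `u`. -/
def linfD {n : ℕ} (u : ℝ → EuclideanSpace ℝ (Fin n)) : ℝ≥0∞ :=
  ⨆ x : ℝ, (‖deriv u x‖₊ : ℝ≥0∞)

/-- A periodic curve is embedded if it is injective on the circle `ℝ/ℤ`. -/
def Embedded {n : ℕ} (u : ℝ → EuclideanSpace ℝ (Fin n)) : Prop :=
  ∀ x y : ℝ, u x = u y → ((x : AddCircle (1 : ℝ)) = (y : AddCircle (1 : ℝ)))

/-- A curve is regular if `min_{ℝ/ℤ} |u'| > 0`. -/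
def Regular {n : ℕ} (u : ℝ → EuclideanSpace ℝ (Fin n)) : Prop :=
  0 < ⨅ x : ℝ, ‖deriv u x‖

/-- Orthogonal projection of `b` onto the orthogonal complement of `ℝ a`. -/
def projPerp {n : ℕ} (a b : EuclideanSpace ℝ (Fin n)) : EuclideanSpace ℝ (Fin n) :=
  b - (⟪b, a⟫ / ‖a‖ ^ 2) • a

/-- The classical tangent-point functional (extended-real-valued). -/
def TPcle {n : ℕ} (q : ℝ) (u : ℝ → EuclideanSpace ℝ (Fin n)) : ℝ≥0∞ :=
  ENNReal.ofReal (1 / q) *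
    ∫⁻ p in unitSq, ENNReal.ofReal
      (‖projPerp (deriv u p.2) (u p.1 - u p.2)‖ ^ q / ‖u p.1 - u p.2‖ ^ (2 * q) *
        (‖deriv u p.1‖ * ‖deriv u p.2‖))

/-- The integrand of the functional `M(u; v, w)`. -/
def Mintegrand {n : ℕ} (q : ℝ) (u v w : ℝ → EuclideanSpace ℝ (Fin n)) (p : ℝ × ℝ) : ℝ :=
  wedgeSq (deriv u p.2) (u p.1 - u p.2) ^ ((q - 2) / 2) / ‖u p.1 - u p.2‖ ^ (2 * q) *
    wedgeInner (deriv u p.2) (u p.1 - u p.2) (deriv v p.2)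
      (w p.1 - w p.2 - wrap (p.1 - p.2) • deriv w p.2)

/-- The functional `M(u; v, w)` appearing in the first variation of `TP`. -/
def Mfun {n : ℕ} (q : ℝ) (u v w : ℝ → EuclideanSpace ℝ (Fin n)) : ℝ :=
  ∫ p in unitSq, Mintegrand q u v w p

/-- The integrand of the functional `A(u; v, w)`. -/
def Aintegrand {n : ℕ} (q : ℝ) (u v w : ℝ → EuclideanSpace ℝ (Fin n)) (p : ℝ × ℝ) : ℝ :=
  wedgeSq (deriv u p.2) (u p.1 - u p.2) ^ (q / 2) / ‖u p.1 - u p.2‖ ^ (2 * q + 2) *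
    ⟪v p.1 - v p.2, w p.1 - w p.2⟫

/-- The functional `A(u; v, w)` appearing in the first variation of `TP`. -/
def Afun {n : ℕ} (q : ℝ) (u v w : ℝ → EuclideanSpace ℝ (Fin n)) : ℝ :=
  ∫ p in unitSq, Aintegrand q u v w p

/-- The first variation `δTP(u)[w] = M(u;u,w) + M(u;w,u) - 2A(u;u,w)`. -/
def deltaTP {n : ℕ} (q : ℝ) (u w : ℝ → EuclideanSpace ℝ (Fin n)) : ℝ :=
  Mfun q u u w + Mfun q u w u - 2 * Afun q u u w

/-- The `H²` inner product on periodic curves. -/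
def H2inner (v w : ℝ → EuclideanSpace ℝ (Fin 3)) : ℝ :=
  ∫ x in Ioc (0 : ℝ) 1,
    (⟪v x, w x⟫ + ⟪deriv v x, deriv w x⟫ + ⟪deriv (deriv v) x, deriv (deriv w) x⟫)

/-- The total energy `E(u) = (κ/2)∫|u''|² + ρ TP(u)`. -/
def energyE (κ ρ q : ℝ) (u : ℝ → EuclideanSpace ℝ (Fin 3)) : ℝ :=
  κ / 2 * (∫ x in Ioc (0 : ℝ) 1, ‖deriv (deriv u) x‖ ^ 2) + ρ * TPr q u

lemma Function.Periodic.setLIntegral_Ioc_eq {f : ℝ → ℝ≥0∞} (hf : Function.Periodic f 1)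
    (a b : ℝ) : ∫⁻ x in Ioc a (a + 1), f x = ∫⁻ x in Ioc b (b + 1), f x := by
  refine (isAddFundamentalDomain_Ioc one_pos a).setLIntegral_eq
    (isAddFundamentalDomain_Ioc one_pos b) f ?_
  rintro ⟨g, k, rfl⟩ x
  change f (k • (1 : ℝ) + x) = f x
  rw [add_comm]
  exact hf.zsmul k x

/-- A double integral over the torus, in coordinates centred on the diagonal. -/
lemma lintegral_unitSq_eq {F : ℝ × ℝ → ℝ≥0∞} (hF : Measurable F)
    (hper : ∀ y, Function.Periodic (fun x => F (x, y)) 1) :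
    ∫⁻ p in unitSq, F p =
      ∫⁻ y in Ioc (0 : ℝ) 1, ∫⁻ h in Ioc (-(1 / 2) : ℝ) (1 / 2), F (y + h, y) := by
  rw [unitSq, Measure.volume_eq_prod, ← Measure.prod_restrict, lintegral_prod_symm' _ hF]
  refine lintegral_congr fun y => ?_
  have h1 := (hper y).setLIntegral_Ioc_eq 0 (y + -(1 / 2))
  rw [zero_add] at h1
  rw [h1]
  have h2 := (measurePreserving_add_left (volume : Measure ℝ) y).setLIntegral_comp_emb
    (measurableEmbedding_addLeft y) (fun x => F (x, y)) (Ioc (-(1 / 2) : ℝ) (1 / 2))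
  rw [h2, image_const_add_Ioc, add_assoc]
  norm_num

/-- Shrinking the argument of an integrand over a symmetric interval. -/
lemma setLIntegral_Ioc_comp_mul_le {G : ℝ → ℝ≥0∞} (hG : Measurable G) {t : ℝ} (ht : t ∈ Ioc (0 : ℝ) 1) :
    ∫⁻ h in Ioc (-(1 / 2) : ℝ) (1 / 2), G (t * h) ≤
      ENNReal.ofReal t⁻¹ * ∫⁻ h in Ioc (-(1 / 2) : ℝ) (1 / 2), G h := by
  obtain ⟨h0, h1⟩ := ht
  set I := Ioc (-(1 / 2) : ℝ) (1 / 2) with hI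
  have hGI : Measurable (I.indicator G) := hG.indicator measurableSet_Ioc
  calc ∫⁻ h in I, G (t * h) ≤ ∫⁻ h, I.indicator G (t * h) := by
        rw [← lintegral_indicator measurableSet_Ioc]
        refine lintegral_mono fun h => indicator_apply_le' (fun hh => ?_) (fun _ => zero_le)
        rw [indicator_of_mem]
        obtain ⟨ha, hb⟩ := hh
        constructor <;> nlinarith
    _ = ∫⁻ h, I.indicator G h ∂(Measure.map (t * ·) volume) :=
        (lintegral_map hGI (measurable_const_mul t)).symm
    _ = ENNReal.ofReal t⁻¹ * ∫⁻ h in I, G h := by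
        rw [Real.map_volume_mul_left h0.ne', lintegral_smul_measure,
          lintegral_indicator measurableSet_Ioc, abs_of_pos (inv_pos.2 h0), smul_eq_mul]

lemma continuous_circDist : Continuous fun p : ℝ × ℝ => circDist p.1 p.2 :=
  continuous_norm.comp ((AddCircle.continuous_mk' 1).comp (continuous_fst.sub continuous_snd))

lemma circDist_add_left {y h : ℝ} (hh : h ∈ Ioc (-(1 / 2) : ℝ) (1 / 2)) :
    circDist (y + h) y = |h| := by
  rw [circDist, add_sub_cancel_left, AddCircle.norm_coe_eq_abs_iff _ one_ne_zero, abs_one, abs_le]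
  exact ⟨hh.1.le, hh.2⟩

lemma circDist_le_bil_mul {n : ℕ} {u : ℝ → EuclideanSpace ℝ (Fin n)} (hbil : bil u < ⊤) {x y : ℝ}
    (hxy : circDist x y ≠ 0) : circDist x y ≤ (bil u).toReal * ‖u x - u y‖ := by
  have h1 : ENNReal.ofReal (circDist x y) / ENNReal.ofReal ‖u x - u y‖ ≤ bil u :=
    le_iSup_of_le x (le_iSup_of_le y (le_iSup_of_le hxy le_rfl))
  have hpos : 0 < circDist x y := lt_of_le_of_ne (norm_nonneg _) hxy.symm
  have hd : ENNReal.ofReal ‖u x - u y‖ ≠ 0 := by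
    intro h0
    rw [h0, ENNReal.div_zero (by simpa using hpos)] at h1
    exact hbil.not_ge h1
  rw [ENNReal.div_le_iff hd ENNReal.ofReal_ne_top] at h1
  have := ENNReal.toReal_mono (ENNReal.mul_ne_top hbil.ne ENNReal.ofReal_ne_top) h1
  rwa [ENNReal.toReal_mul, ENNReal.toReal_ofReal hpos.le,
    ENNReal.toReal_ofReal (norm_nonneg _)] at this

section Wedge

variable {n : ℕ} (a b : EuclideanSpace ℝ (Fin n))

lemma wedgeSq_nonneg : 0 ≤ wedgeSq a b := by
  have := abs_real_inner_le_norm a b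
  have h2 : ⟪a, b⟫ ^ 2 ≤ (‖a‖ * ‖b‖) ^ 2 := sq_le_sq' (neg_le_of_abs_le this) (le_of_abs_le this)
  rw [wedgeSq]
  linarith [mul_pow ‖a‖ ‖b‖ 2]

lemma wedgeSq_le (c : ℝ) : wedgeSq a b ≤ (‖a‖ * ‖b - c • a‖) ^ 2 := by
  have h : wedgeSq a b = wedgeSq a (b - c • a) := by
    simp only [wedgeSq, ← real_inner_self_eq_norm_sq, inner_sub_left, inner_sub_right,
      inner_smul_left, inner_smul_right, real_inner_comm a b]
    simp
    ring
  rw [h, wedgeSq, mul_pow]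
  linarith [sq_nonneg ⟪a, b - c • a⟫]

lemma norm_projPerp_sq {a : EuclideanSpace ℝ (Fin n)} (ha : a ≠ 0) :
    ‖projPerp a b‖ ^ 2 = wedgeSq a b / ‖a‖ ^ 2 := by
  have h : ‖a‖ ^ 2 ≠ 0 := by simpa using ha
  rw [projPerp, norm_sub_sq_real, norm_smul, inner_smul_right, wedgeSq, mul_pow, Real.norm_eq_abs,
    sq_abs, real_inner_comm]
  field_simp
  ring

lemma norm_projPerp_rpow {a : EuclideanSpace ℝ (Fin n)} (ha : a ≠ 0) (q : ℝ) :
    ‖projPerp a b‖ ^ q = wedgeSq a b ^ (q / 2) / ‖a‖ ^ q := by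
  have h1 : ∀ r : ℝ, 0 ≤ r → r ^ q = (r ^ 2) ^ (q / 2) := fun r hr => by
    rw [← Real.rpow_natCast, ← Real.rpow_mul hr]
    congr 1
    push_cast
    ring
  rw [h1 _ (norm_nonneg _), norm_projPerp_sq b ha, h1 ‖a‖ (norm_nonneg _),
    Real.div_rpow (wedgeSq_nonneg a b) (sq_nonneg _)]

end Wedge

section Taylor

variable {E : Type*} [NormedAddCommGroup E] [NormedSpace ℝ E] [CompleteSpace E] {u : ℝ → E}

lemma ContDiff.sub_sub_smul_deriv_eq (hu : ContDiff ℝ 1 u) (y h : ℝ) :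
    u (y + h) - u y - h • deriv u y =
      h • ∫ t in Ioc (0 : ℝ) 1, (deriv u (y + t * h) - deriv u y) := by
  have hc : Continuous (deriv u) := hu.continuous_deriv le_rfl
  have h1 : ∀ t ∈ uIcc (0 : ℝ) 1,
      HasDerivAt (fun t => u (y + t * h) - t • h • deriv u y)
        (h • (deriv u (y + t * h) - deriv u y)) t := fun t _ => by
    have h2 : HasDerivAt (fun t : ℝ => y + t * h) h t := by
      simpa using ((hasDerivAt_id t).mul_const h).const_add y
    have h3 := (hu.differentiable one_ne_zero (y + t * h)).hasDerivAt.scomp t h2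
    have h4 := (hasDerivAt_id t).smul_const (h • deriv u y)
    convert! h3.sub h4 using 1
    simp [smul_sub]
  have h5 := intervalIntegral.integral_eq_sub_of_hasDerivAt h1
    (Continuous.intervalIntegrable (by fun_prop) _ _)
  rw [intervalIntegral.integral_smul, intervalIntegral.integral_of_le zero_le_one] at h5
  rw [h5]
  simp
  abel

/-- First order Taylor estimate in `L^q`-averaged form. -/
lemma ContDiff.norm_sub_sub_smul_deriv_rpow_le (hu : ContDiff ℝ 1 u) {q : ℝ} (hq : 1 ≤ q)
    (y h : ℝ) :
    ‖u (y + h) - u y - h • deriv u y‖ ^ q ≤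
      |h| ^ q * ∫ t in Ioc (0 : ℝ) 1, ‖deriv u (y + t * h) - deriv u y‖ ^ q := by
  have hc : Continuous (deriv u) := hu.continuous_deriv le_rfl
  rw [hu.sub_sub_smul_deriv_eq, norm_smul, Real.norm_eq_abs,
    Real.mul_rpow (abs_nonneg _) (norm_nonneg _)]
  gcongr
  have : IsProbabilityMeasure (volume.restrict (Ioc (0 : ℝ) 1)) := ⟨by simp⟩
  have hf : Continuous fun t => ‖deriv u (y + t * h) - deriv u y‖ := by fun_prop
  calc ‖∫ t in Ioc (0 : ℝ) 1, (deriv u (y + t * h) - deriv u y)‖ ^ q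
      ≤ (∫ t in Ioc (0 : ℝ) 1, ‖deriv u (y + t * h) - deriv u y‖) ^ q :=
        Real.rpow_le_rpow (norm_nonneg _) (norm_integral_le_integral_norm _) (by linarith)
    _ ≤ _ := (convexOn_rpow hq).map_integral_le
        (Real.continuous_rpow_const (by linarith)).continuousOn isClosed_Ici
        (ae_of_all _ fun _ => norm_nonneg _)
        (hf.integrableOn_Icc.mono_set Ioc_subset_Icc_self)
        (((Real.continuous_rpow_const (by linarith)).comp hf).integrableOn_Icc.mono_set
          Ioc_subset_Icc_self)

end Taylor

section TangentPoint

variable {n : ℕ} {u : ℝ → EuclideanSpace ℝ (Fin n)} {q Λ : ℝ}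

lemma Function.Periodic.deriv_one (hper : Function.Periodic u 1) :
    Function.Periodic (deriv u) 1 := fun x => by
  rw [← deriv_comp_add_const, funext hper]

lemma sobSemPow_eq (hq : 0 < q) {f : ℝ → EuclideanSpace ℝ (Fin n)} (hf : Continuous f)
    (hper : Function.Periodic f 1) :
    sobSemPow (1 - 1 / q) q f = ∫⁻ y in Ioc (0 : ℝ) 1, ∫⁻ h in Ioc (-(1 / 2) : ℝ) (1 / 2),
      ENNReal.ofReal (‖f (y + h) - f y‖ ^ q / |h| ^ q) := by
  have hexp : 1 + (1 - 1 / q) * q = q := by field_simp; ring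
  rw [sobSemPow, hexp, lintegral_unitSq_eq]
  · refine lintegral_congr fun y => setLIntegral_congr_fun measurableSet_Ioc fun h hh => ?_
    simp only [circDist_add_left hh]
  · have h1 : Measurable fun p : ℝ × ℝ => circDist p.1 p.2 := continuous_circDist.measurable
    have h2 : Measurable fun p : ℝ × ℝ => ‖f p.1 - f p.2‖ :=
      Continuous.measurable (by fun_prop)
    exact ((h2.pow_const q).div (h1.pow_const q)).ennreal_ofReal
  · intro y x
    have : circDist (x + 1) y = circDist x y := by
      rw [circDist, circDist, add_sub_right_comm, AddCircle.coe_add_period]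
    simp only [hper x, this]

lemma measurable_tp_integrand (hu : ContDiff ℝ 1 u) (q : ℝ) :
    Measurable fun p : ℝ × ℝ => ENNReal.ofReal
      (wedgeSq (deriv u p.2) (u p.1 - u p.2) ^ (q / 2) / ‖u p.1 - u p.2‖ ^ (2 * q)) := by
  have hc : Continuous (deriv u) := hu.continuous_deriv le_rfl
  have hc' : Continuous u := hu.continuous
  have h1 : Measurable fun p : ℝ × ℝ => wedgeSq (deriv u p.2) (u p.1 - u p.2) :=
    Continuous.measurable (by unfold wedgeSq; fun_prop)
  have h2 : Measurable fun p : ℝ × ℝ => ‖u p.1 - u p.2‖ := Continuous.measurable (by fun_prop)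
  exact ((h1.pow_const _).div (h2.pow_const _)).ennreal_ofReal

lemma div_rpow_le_of_le_mul (hq : 0 ≤ q) {W K J B d r : ℝ} (hr : 0 < r) (hd0 : 0 < d)
    (hB : 0 ≤ B) (hK : 0 ≤ K) (hJ : 0 ≤ J) (hd : r ≤ B * d) (hW : W ≤ K * (r ^ q * J)) :
    W / d ^ (2 * q) ≤ B ^ (2 * q) * K * (J / r ^ q) := by
  have hD : r ^ (2 * q) ≤ B ^ (2 * q) * d ^ (2 * q) := by
    rw [← Real.mul_rpow hB hd0.le]
    exact Real.rpow_le_rpow hr.le hd (by linarith)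
  rw [div_le_iff₀ (by positivity)]
  calc W ≤ K * (r ^ q * J) := hW
    _ = r ^ (2 * q) * (K * (J / r ^ q)) := by
        rw [two_mul, Real.rpow_add hr]
        field_simp
    _ ≤ B ^ (2 * q) * d ^ (2 * q) * (K * (J / r ^ q)) := by gcongr
    _ = _ := by ring

lemma tp_integrand_real_le (hq : 1 ≤ q) (hu : ContDiff ℝ 1 u)
    (hbil : bil u < ⊤) (hup : ∀ x, ‖deriv u x‖ ≤ Λ) (y : ℝ) {h : ℝ}
    (hh : h ∈ Ioc (-(1 / 2) : ℝ) (1 / 2)) (h0 : h ≠ 0) :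
    wedgeSq (deriv u y) (u (y + h) - u y) ^ (q / 2) / ‖u (y + h) - u y‖ ^ (2 * q) ≤
      (bil u).toReal ^ (2 * q) * Λ ^ q *
        ∫ t in Ioc (0 : ℝ) 1, ‖deriv u (y + t * h) - deriv u y‖ ^ q / |h| ^ q := by
  set d := u (y + h) - u y
  set B := (bil u).toReal
  have hB : 0 ≤ B := ENNReal.toReal_nonneg
  have hΛ : 0 ≤ Λ := (norm_nonneg _).trans (hup 0)
  have hh0 : 0 < |h| := abs_pos.2 h0
  have hd : |h| ≤ B * ‖d‖ := by
    have := circDist_le_bil_mul hbil (x := y + h) (y := y)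
    rw [circDist_add_left hh] at this
    exact this hh0.ne'
  have hd0 : 0 < ‖d‖ := by
    by_contra hcon
    have : ‖d‖ = 0 := le_antisymm (not_lt.1 hcon) (norm_nonneg _)
    rw [this, mul_zero] at hd
    linarith
  rw [integral_div]
  set J := ∫ t in Ioc (0 : ℝ) 1, ‖deriv u (y + t * h) - deriv u y‖ ^ q
  have hJ : 0 ≤ J := integral_nonneg fun _ => by positivity
  have hW : wedgeSq (deriv u y) d ^ (q / 2) ≤ Λ ^ q * (|h| ^ q * J) :=
    calc wedgeSq (deriv u y) d ^ (q / 2)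
        ≤ ((Λ * ‖d - h • deriv u y‖) ^ 2) ^ (q / 2) := by
          refine Real.rpow_le_rpow (wedgeSq_nonneg _ _) ((wedgeSq_le _ _ h).trans ?_) (by linarith)
          gcongr
          exact hup y
      _ = Λ ^ q * ‖d - h • deriv u y‖ ^ q := by
          rw [← Real.mul_rpow hΛ (norm_nonneg _), ← Real.rpow_natCast,
            ← Real.rpow_mul (by positivity)]
          congr 1
          push_cast
          ring
      _ ≤ _ := by
          gcongr
          exact hu.norm_sub_sub_smul_deriv_rpow_le hq y h
  exact div_rpow_le_of_le_mul (by linarith) hh0 hd0 hB (Real.rpow_nonneg hΛ q) hJ hd hW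

lemma tp_integrand_le (hq : 1 ≤ q) (hu : ContDiff ℝ 1 u)
    (hbil : bil u < ⊤) (hup : ∀ x, ‖deriv u x‖ ≤ Λ) (y : ℝ) {h : ℝ}
    (hh : h ∈ Ioc (-(1 / 2) : ℝ) (1 / 2)) :
    ENNReal.ofReal (wedgeSq (deriv u y) (u (y + h) - u y) ^ (q / 2) /
        ‖u (y + h) - u y‖ ^ (2 * q)) ≤
      ENNReal.ofReal ((bil u).toReal ^ (2 * q) * Λ ^ q) *
        ∫⁻ t in Ioc (0 : ℝ) 1, ENNReal.ofReal (t ^ q) *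
          ENNReal.ofReal (‖deriv u (y + t * h) - deriv u y‖ ^ q / |t * h| ^ q) := by
  rcases eq_or_ne h 0 with rfl | h0
  · simp [Real.zero_rpow (by linarith : 2 * q ≠ 0)]
  have hc : Continuous (deriv u) := hu.continuous_deriv le_rfl
  have hΛ : 0 ≤ Λ := (norm_nonneg _).trans (hup 0)
  have hcont : Continuous fun t : ℝ => ‖deriv u (y + t * h) - deriv u y‖ ^ q / |h| ^ q :=
    (Continuous.rpow_const (by fun_prop) fun _ => Or.inr (by linarith)).div_const _
  refine (ENNReal.ofReal_le_ofReal (tp_integrand_real_le hq hu hbil hup y hh h0)).trans ?_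
  rw [ENNReal.ofReal_mul (by positivity), ofReal_integral_eq_lintegral_ofReal
    (hcont.integrableOn_Icc.mono_set Ioc_subset_Icc_self) (ae_of_all _ fun _ => by positivity)]
  refine mul_le_mul' le_rfl ?_
  refine (setLIntegral_congr_fun measurableSet_Ioc fun t ht => ?_).le
  have ht0 : 0 < t ^ q := Real.rpow_pos_of_pos ht.1 q
  have hh0 : 0 < |h| := abs_pos.2 h0
  rw [← ENNReal.ofReal_mul ht0.le, abs_mul, abs_of_pos ht.1, Real.mul_rpow ht.1.le hh0.le]
  congr 1
  field_simp

/-- The integral defining `TP` is controlled by the Sobolev–Slobodeckii seminorm of `u'`. -/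
lemma lintegral_tp_le (hq : 1 ≤ q) (hu : ContDiff ℝ 1 u) (hper : Function.Periodic u 1)
    (hbil : bil u < ⊤) (hup : ∀ x, ‖deriv u x‖ ≤ Λ) :
    ∫⁻ p in unitSq, ENNReal.ofReal
        (wedgeSq (deriv u p.2) (u p.1 - u p.2) ^ (q / 2) / ‖u p.1 - u p.2‖ ^ (2 * q)) ≤
      ENNReal.ofReal ((bil u).toReal ^ (2 * q) * Λ ^ q) *
        sobSemPow (1 - 1 / q) q (deriv u) := by
  have hc : Continuous (deriv u) := hu.continuous_deriv le_rfl
  rw [lintegral_unitSq_eq (measurable_tp_integrand hu q) fun y x => by simp only [hper x],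
    sobSemPow_eq (by linarith) hc hper.deriv_one,
    ← lintegral_const_mul' _ _ ENNReal.ofReal_ne_top]
  refine lintegral_mono fun y => ?_
  set G : ℝ → ℝ≥0∞ := fun h => ENNReal.ofReal (‖deriv u (y + h) - deriv u y‖ ^ q / |h| ^ q)
  have hG : Measurable G := by
    have h1 : Measurable fun h => ‖deriv u (y + h) - deriv u y‖ :=
      Continuous.measurable (by fun_prop)
    exact ((h1.pow_const q).div (measurable_norm.pow_const q)).ennreal_ofReal
  calc ∫⁻ h in Ioc (-(1 / 2) : ℝ) (1 / 2), ENNReal.ofReal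
          (wedgeSq (deriv u y) (u (y + h) - u y) ^ (q / 2) / ‖u (y + h) - u y‖ ^ (2 * q))
      ≤ ∫⁻ h in Ioc (-(1 / 2) : ℝ) (1 / 2),
          ENNReal.ofReal ((bil u).toReal ^ (2 * q) * Λ ^ q) *
            ∫⁻ t in Ioc (0 : ℝ) 1, ENNReal.ofReal (t ^ q) * G (t * h) :=
        setLIntegral_mono' measurableSet_Ioc fun h hh => tp_integrand_le hq hu hbil hup y hh
    _ = ENNReal.ofReal ((bil u).toReal ^ (2 * q) * Λ ^ q) *
          ∫⁻ t in Ioc (0 : ℝ) 1, ENNReal.ofReal (t ^ q) *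
            ∫⁻ h in Ioc (-(1 / 2) : ℝ) (1 / 2), G (t * h) := by
        rw [lintegral_const_mul' _ _ ENNReal.ofReal_ne_top, lintegral_lintegral_swap]
        · simp_rw [lintegral_const_mul' _ _ ENNReal.ofReal_ne_top]
        · refine Measurable.aemeasurable (Measurable.mul ?_ (hG.comp ?_))
          · exact (measurable_snd.pow_const q).ennreal_ofReal
          · exact measurable_snd.mul measurable_fst
    _ ≤ ENNReal.ofReal ((bil u).toReal ^ (2 * q) * Λ ^ q) *
          ∫⁻ _ in Ioc (0 : ℝ) 1, ∫⁻ h in Ioc (-(1 / 2) : ℝ) (1 / 2), G h := by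
        refine mul_le_mul' le_rfl ?_
        refine setLIntegral_mono' measurableSet_Ioc fun t ht => ?_
        refine (mul_le_mul_right (setLIntegral_Ioc_comp_mul_le hG ht) _).trans ?_
        rw [← mul_assoc, ← ENNReal.ofReal_mul (Real.rpow_nonneg ht.1.le q)]
        refine mul_le_of_le_one_left zero_le (ENNReal.ofReal_le_one.2 ?_)
        rw [← div_eq_mul_inv, div_le_one ht.1]
        simpa using Real.rpow_le_rpow_of_exponent_ge ht.1 ht.2 hq
    _ = ENNReal.ofReal ((bil u).toReal ^ (2 * q) * Λ ^ q) *
          ∫⁻ h in Ioc (-(1 / 2) : ℝ) (1 / 2), G h := by simp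

/-- The ratio of the integrands of the classical and the variant functional. -/
lemma speed_ratio_mem (hq : 1 ≤ q) (hΛ : 1 ≤ Λ) {a b : ℝ} (ha : a ∈ Icc (1 / Λ) Λ)
    (hb : b ∈ Icc (1 / Λ) Λ) : a * b / b ^ q ∈ Icc (Λ ^ q)⁻¹ (Λ ^ q) := by
  have hΛ0 : 0 < Λ := by linarith
  have hb0 : 0 < b := (by positivity : 0 < 1 / Λ).trans_le hb.1
  have hc : a * b / b ^ q = a / b ^ (q - 1) := by
    rw [Real.rpow_sub_one hb0.ne']
    field_simp
  have hsplit : Λ ^ q = Λ * Λ ^ (q - 1) := by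
    rw [Real.rpow_sub_one hΛ0.ne']
    field_simp
  have hu : b ^ (q - 1) ≤ Λ ^ (q - 1) := Real.rpow_le_rpow hb0.le hb.2 (by linarith)
  have hl : (Λ ^ (q - 1))⁻¹ ≤ b ^ (q - 1) := by
    rw [← Real.inv_rpow hΛ0.le, ← one_div]
    exact Real.rpow_le_rpow (by positivity) hb.1 (by linarith)
  have hbp : 0 < b ^ (q - 1) := Real.rpow_pos_of_pos hb0 _
  have hΛp : 0 < Λ ^ (q - 1) := Real.rpow_pos_of_pos hΛ0 _
  rw [hc, hsplit, mul_inv, div_eq_mul_inv]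
  have ha1 := ha.1
  rw [one_div] at ha1
  have ha0 : 0 < a := (inv_pos.2 hΛ0).trans_le ha1
  exact ⟨by gcongr, by gcongr; exacts [ha.2, inv_le_of_inv_le₀ hΛp hl]⟩

/-- A Bernoulli-type estimate. -/
lemma rpow_sub_one_le (hq : 1 ≤ q) (hΛ : 1 ≤ Λ) : Λ ^ q - 1 ≤ q * (Λ ^ q * (Λ - 1)) := by
  have hΛ0 : 0 < Λ := by linarith
  have h1 := one_add_mul_self_le_rpow_one_add
    (by linarith [inv_pos.2 hΛ0] : -1 ≤ Λ⁻¹ - 1) hq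
  rw [add_sub_cancel, Real.inv_rpow hΛ0.le] at h1
  have hp : 0 < Λ ^ q := Real.rpow_pos_of_pos hΛ0 q
  have h2 : 1 - Λ⁻¹ ≤ Λ - 1 := by
    have := mul_inv_cancel₀ hΛ0.ne'
    nlinarith [sq_nonneg (Λ - 1), inv_pos.2 hΛ0]
  have h3 : 1 - (Λ ^ q)⁻¹ ≤ q * (Λ - 1) := by nlinarith
  have h4 := mul_le_mul_of_nonneg_left h3 hp.le
  rw [mul_sub, mul_inv_cancel₀ hp.ne'] at h4
  linarith

lemma projPerp_integrand_eq {a d : EuclideanSpace ℝ (Fin n)} (ha : a ≠ 0) (q r : ℝ) :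
    ‖projPerp a d‖ ^ q / ‖d‖ ^ (2 * q) * (r * ‖a‖) =
      wedgeSq a d ^ (q / 2) / ‖d‖ ^ (2 * q) * (r * ‖a‖ / ‖a‖ ^ q) := by
  rw [norm_projPerp_rpow d ha]
  ring

lemma tpcle_le_and_tpe_le (hq : 1 ≤ q) (hΛ : 1 ≤ Λ)
    (hlow : ∀ x, 1 / Λ ≤ ‖deriv u x‖) (hup : ∀ x, ‖deriv u x‖ ≤ Λ) :
    TPcle q u ≤ ENNReal.ofReal (Λ ^ q) * TPe q u ∧
      TPe q u ≤ ENNReal.ofReal (Λ ^ q) * TPcle q u := by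
  have hΛ0 : 0 < Λ := by linarith
  have hp : 0 < Λ ^ q := Real.rpow_pos_of_pos hΛ0 q
  have hne : ∀ x, deriv u x ≠ 0 := fun x =>
    norm_pos_iff.1 ((by positivity : 0 < 1 / Λ).trans_le (hlow x))
  have hB : ∀ p : ℝ × ℝ, 0 ≤
      wedgeSq (deriv u p.2) (u p.1 - u p.2) ^ (q / 2) / ‖u p.1 - u p.2‖ ^ (2 * q) := fun p =>
    div_nonneg (Real.rpow_nonneg (wedgeSq_nonneg _ _) _) (by positivity)
  have hr := fun p : ℝ × ℝ =>
    speed_ratio_mem hq hΛ ⟨hlow p.1, hup p.1⟩ ⟨hlow p.2, hup p.2⟩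
  unfold TPcle TPe
  constructor
  all_goals
    rw [mul_left_comm, ← lintegral_const_mul' (ENNReal.ofReal (Λ ^ q)) _ ENNReal.ofReal_ne_top]
    refine mul_le_mul' le_rfl (lintegral_mono fun p => ?_)
    rw [projPerp_integrand_eq (hne p.2), ← ENNReal.ofReal_mul hp.le]
    refine ENNReal.ofReal_le_ofReal ?_
  · rw [mul_comm (Λ ^ q)]
    exact mul_le_mul_of_nonneg_left (hr p).2 (hB p)
  · rw [mul_left_comm]
    refine le_mul_of_one_le_right (hB p) ?_
    rw [← mul_inv_cancel₀ hp.ne']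
    exact mul_le_mul_of_nonneg_left (hr p).1 hp.le

end TangentPoint

/-- Approximation, Proposition 3.5: the classical tangent-point
functional and the variant `TP` differ by at most
`(bil u)^{2q} Λ^{2q} [u']_{W^{1-1/q,q}}^q (Λ - 1)`
whenever `1/Λ ≤ |u'| ≤ Λ`. -/
theorem tp_classical_approximation (n : ℕ) (q Λ : ℝ) (hq : 2 < q) (hΛ : 1 ≤ Λ)
    (u : ℝ → EuclideanSpace ℝ (Fin n))
    (hC1 : ContDiff ℝ 1 u) (hper : Function.Periodic u 1)
    (hemb : Embedded u) (hreg : Regular u)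
    (hbil : bil u < ⊤) (hsem : sobSemPow (1 - 1 / q) q (deriv u) < ⊤)
    (hlow : ∀ x, 1 / Λ ≤ ‖deriv u x‖) (hup : ∀ x, ‖deriv u x‖ ≤ Λ) :
    TPcle q u ≠ ⊤ ∧ TPe q u ≠ ⊤ ∧
      |(TPcle q u).toReal - (TPe q u).toReal| ≤
        (bil u).toReal ^ (2 * q) * Λ ^ (2 * q) *
          (sobSemPow (1 - 1 / q) q (deriv u)).toReal * (Λ - 1) := by
  have hq1 : 1 ≤ q := by linarith
  have hq0 : 0 < q := by linarith
  have hp : 0 < Λ ^ q := Real.rpow_pos_of_pos (by linarith) q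
  have hp1 : 1 ≤ Λ ^ q := Real.one_le_rpow hΛ hq0.le
  set S := sobSemPow (1 - 1 / q) q (deriv u)
  set C := (bil u).toReal ^ (2 * q) * Λ ^ q with hC
  have hC0 : 0 ≤ C := by positivity
  have hTP : TPe q u ≤ ENNReal.ofReal (1 / q) * (ENNReal.ofReal C * S) := by
    unfold TPe
    gcongr
    exact lintegral_tp_le hq1 hC1 hper hbil hup
  have hfin : ENNReal.ofReal (1 / q) * (ENNReal.ofReal C * S) ≠ ⊤ :=
    ENNReal.mul_ne_top ENNReal.ofReal_ne_top (ENNReal.mul_ne_top ENNReal.ofReal_ne_top hsem.ne)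
  have hTPfin : TPe q u ≠ ⊤ := ne_top_of_le_ne_top hfin hTP
  obtain ⟨h1, h2⟩ := tpcle_le_and_tpe_le hq1 hΛ hlow hup
  have hfin1 := ENNReal.mul_ne_top (ENNReal.ofReal_ne_top (r := Λ ^ q)) hTPfin
  have hclfin : TPcle q u ≠ ⊤ := ne_top_of_le_ne_top hfin1 h1
  refine ⟨hclfin, hTPfin, ?_⟩
  replace h1 := ENNReal.toReal_mono hfin1 h1
  replace h2 := ENNReal.toReal_mono (ENNReal.mul_ne_top ENNReal.ofReal_ne_top hclfin) h2
  replace hTP := ENNReal.toReal_mono hfin hTP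
  rw [ENNReal.toReal_mul, ENNReal.toReal_ofReal hp.le] at h1 h2
  rw [ENNReal.toReal_mul, ENNReal.toReal_mul, ENNReal.toReal_ofReal (by positivity),
    ENNReal.toReal_ofReal hC0] at hTP
  have hS : 0 ≤ S.toReal := ENNReal.toReal_nonneg
  have hb : 0 ≤ (TPe q u).toReal := ENNReal.toReal_nonneg
  have habs : |(TPcle q u).toReal - (TPe q u).toReal| ≤ (Λ ^ q - 1) * (TPe q u).toReal := by
    rw [abs_le]
    constructor <;> nlinarith
  calc |(TPcle q u).toReal - (TPe q u).toReal| ≤ (Λ ^ q - 1) * (TPe q u).toReal := habs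
    _ ≤ q * (Λ ^ q * (Λ - 1)) * (1 / q * (C * S.toReal)) := by
        have hΛ1 : 0 ≤ Λ - 1 := by linarith
        exact mul_le_mul (rpow_sub_one_le hq1 hΛ) hTP hb (by positivity)
    _ = _ := by
        rw [hC, two_mul q, Real.rpow_add (by linarith : 0 < Λ)]
        field_simp
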